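/- Let p and q be prime numbers with p ≠ 2. Then Γ(ℤ_p × ℤ_{q²}) is partitionable into global defensive alliances if and only if q ≠ 2; namely, ψ_g(Γ(ℤ_p × ℤ_{q²})) = 2 if q ≠ 2, and ψ_g(Γ(ℤ_p × ℤ_{q²})) = 1 if q = 2. -/

import Mathlib

open Classical

/-- The set of zero-divisors of `R` (including `0`). -/
def zeroDivisorSet (R : Type*) [CommRing R] : Set R :=
  {x : R | ∃ y : R, y ≠ 0 ∧ x * y = 0}

/-- Vertices of the zero-divisor graph: the nonzero zero-divisors of `R`. -/
abbrev ZDV (R : Type*) [CommRing R] : Type _ :=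
  {x : R // x ≠ 0 ∧ ∃ y : R, y ≠ 0 ∧ x * y = 0}

/-- The zero-divisor graph `Γ(R)` of a commutative ring `R`: vertices are the nonzero
zero-divisors, and distinct vertices `x`, `y` are adjacent iff `x * y = 0`. -/
def zdGraph (R : Type*) [CommRing R] : SimpleGraph (ZDV R) where
  Adj a b := a ≠ b ∧ (a : R) * (b : R) = 0
  symm := by
    refine ⟨?_⟩
    intro a b h
    exact ⟨h.1.symm, by rw [mul_comm]; exact h.2⟩
  loopless := by
    refine ⟨?_⟩
    intro a h
    exact h.1 rfl

/-- `degIn G S v` is the number of neighbors of `v` lying in `S`. -/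
noncomputable def degIn {V : Type*} (G : SimpleGraph V) (S : Set V) (v : V) : ℕ :=
  Set.ncard {u : V | u ∈ S ∧ G.Adj v u}

/-- `S` is a dominating set: every vertex outside `S` has a neighbor in `S`. -/
def IsDominatingSet {V : Type*} (G : SimpleGraph V) (S : Set V) : Prop :=
  ∀ v ∉ S, ∃ u ∈ S, G.Adj v u

/-- `S` is a defensive alliance: `S` is nonempty and every `v ∈ S` satisfies
`deg_S(v) + 1 ≥ deg_{Sᶜ}(v)`. -/
def IsDefensiveAlliance {V : Type*} (G : SimpleGraph V) (S : Set V) : Prop :=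
  S.Nonempty ∧ ∀ v ∈ S, degIn G Sᶜ v ≤ degIn G S v + 1

/-- A global defensive alliance is a defensive alliance that is also a dominating set. -/
def IsGlobalDefensiveAlliance {V : Type*} (G : SimpleGraph V) (S : Set V) : Prop :=
  IsDefensiveAlliance G S ∧ IsDominatingSet G S

/-- `P` is a partition of the vertex set of `G` into global defensive alliances. -/
def IsGDAPartition {V : Type*} (G : SimpleGraph V) (P : Finset (Set V)) : Prop :=
  (∀ S ∈ P, IsGlobalDefensiveAlliance G S) ∧
  (⋃₀ (P : Set (Set V)) = Set.univ) ∧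
  ((P : Set (Set V)).Pairwise Disjoint)

/-- The global defensive alliance partition number `ψ_g(G)`: the maximum number of parts in
a partition of the vertex set into global defensive alliances. -/
noncomputable def psiG {V : Type*} (G : SimpleGraph V) : ℕ :=
  sSup {n : ℕ | ∃ P : Finset (Set V), IsGDAPartition G P ∧ P.card = n}

/-- `G` is partitionable into global defensive alliances iff `ψ_g(G) ≥ 2`. -/
def PartitionableGDA {V : Type*} (G : SimpleGraph V) : Prop :=
  2 ≤ psiG G

/-- The global defensive alliance number `γ_a(G)`: the minimum cardinality of a global
defensive alliance. -/
noncomputable def gammaA {V : Type*} (G : SimpleGraph V) : ℕ :=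
  sInf {n : ℕ | ∃ S : Set V, IsGlobalDefensiveAlliance G S ∧ S.ncard = n}

theorem psiG_eq_of {V : Type*} (G : SimpleGraph V) (n : ℕ)
    (h1 : ∃ P : Finset (Set V), IsGDAPartition G P ∧ P.card = n)
    (h2 : ∀ P : Finset (Set V), IsGDAPartition G P → P.card ≤ n) : psiG G = n := by
  unfold psiG
  apply IsGreatest.csSup_eq
  refine ⟨h1, ?_⟩
  rintro m ⟨P, hP, rfl⟩
  exact h2 P hP

theorem univ_partition {V : Type*} [Nonempty V] (G : SimpleGraph V) :
    IsGDAPartition G {Set.univ} := by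
  refine ⟨?_, by simp, by simp⟩
  intro S hS
  rw [Finset.mem_singleton] at hS
  subst hS
  refine ⟨⟨Set.univ_nonempty, ?_⟩, ?_⟩
  · intro v _
    simp [degIn]
  · intro v hv
    exact absurd (Set.mem_univ v) hv

/-- negation on vertices -/
def zneg {R : Type*} [CommRing R] (x : ZDV R) : ZDV R :=
  ⟨-x.1, neg_ne_zero.2 x.2.1, by
    obtain ⟨y, hy, h⟩ := x.2.2
    exact ⟨y, hy, by rw [neg_mul, h, neg_zero]⟩⟩

theorem zneg_zneg {R : Type*} [CommRing R] (x : ZDV R) : zneg (zneg x) = x :=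
  Subtype.ext (neg_neg x.1)

theorem half_gda {R : Type*} [CommRing R] [Finite R] [Nonempty (ZDV R)]
    (hR : ∀ x : R, -x = x → x = 0) (S : Set (ZDV R))
    (hS : ∀ x, x ∈ S ↔ zneg x ∉ S) : IsGlobalDefensiveAlliance (zdGraph R) S := by
  have hne : ∀ x : ZDV R, zneg x ≠ x := fun x h => x.2.1 (hR _ (congrArg Subtype.val h))
  have hS' : ∀ x, x ∉ S → zneg x ∈ S := fun x hx => by
    rw [hS, zneg_zneg]; exact hx
  refine ⟨⟨?_, ?_⟩, ?_⟩
  · obtain ⟨x⟩ := ‹Nonempty (ZDV R)›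
    by_cases hx : x ∈ S
    · exact ⟨x, hx⟩
    · exact ⟨_, hS' x hx⟩
  · intro v hv
    unfold degIn
    have : {u | u ∈ Sᶜ ∧ (zdGraph R).Adj v u} ⊆
        insert (zneg v) (zneg '' {u | u ∈ S ∧ (zdGraph R).Adj v u}) := by
      rintro u ⟨hu, h1, h2⟩
      by_cases huv : u = zneg v
      · exact Or.inl huv
      · right
        refine ⟨zneg u, ⟨hS' u hu, ?_, ?_⟩, zneg_zneg u⟩
        · intro h
          apply huv
          rw [h, zneg_zneg]
        · change v.1 * (-u.1) = 0
          rw [mul_neg, h2, neg_zero]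
    refine (Set.ncard_le_ncard this (Set.toFinite _)).trans ?_
    refine (Set.ncard_insert_le _ _).trans ?_
    exact Nat.add_le_add_right (Set.ncard_image_le (Set.toFinite _)) 1
  · intro v hv
    obtain ⟨w, hw, hvw⟩ := v.2.2
    by_cases hwv : w = v.1
    · refine ⟨zneg v, hS' v hv, (hne v).symm, ?_⟩
      change v.1 * (-v.1) = 0
      rw [hwv] at hvw
      rw [mul_neg, hvw, neg_zero]
    · let u : ZDV R := ⟨w, hw, v.1, v.2.1, by rw [mul_comm]; exact hvw⟩
      by_cases hu : u ∈ S
      · exact ⟨u, hu, fun h => hwv (congrArg Subtype.val h).symm, hvw⟩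
      · refine ⟨zneg u, hS' u hu, ?_, ?_⟩
        · intro h
          apply hu
          have : u = zneg v := by rw [h, zneg_zneg]
          rw [this]
          exact hS' v hv
        · change v.1 * (-w) = 0
          rw [mul_neg, hvw, neg_zero]

theorem exists_two {R : Type*} [CommRing R] [Finite R] [Nonempty (ZDV R)]
    (hR : ∀ x : R, -x = x → x = 0) :
    ∃ P : Finset (Set (ZDV R)), IsGDAPartition (zdGraph R) P ∧ P.card = 2 := by
  have hne : ∀ x : ZDV R, zneg x ≠ x := fun x h => x.2.1 (hR _ (congrArg Subtype.val h))
  let S : Set (ZDV R) := {x | WellOrderingRel x (zneg x)}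
  have hS : ∀ x, x ∈ S ↔ zneg x ∉ S := by
    intro x
    change WellOrderingRel x (zneg x) ↔ ¬ WellOrderingRel (zneg x) (zneg (zneg x))
    rw [zneg_zneg]
    constructor
    · exact fun h => asymm h
    · intro h
      rcases trichotomous_of WellOrderingRel x (zneg x) with h' | h' | h'
      · exact h'
      · exact absurd h'.symm (hne x)
      · exact absurd h' h
  have hSc : ∀ x, x ∈ Sᶜ ↔ zneg x ∉ Sᶜ := by
    intro x
    have := hS x
    simp only [Set.mem_compl_iff]
    tauto
  have h1 := half_gda hR S hS
  have h2 := half_gda hR Sᶜ hSc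
  have hSS : S ≠ Sᶜ := by
    intro h
    obtain ⟨x, hx⟩ := h1.1.1
    have hx' := hx
    rw [h] at hx'
    exact hx' hx
  refine ⟨{S, Sᶜ}, ⟨?_, ?_, ?_⟩, Finset.card_pair hSS⟩
  · intro T hT
    simp only [Finset.mem_insert, Finset.mem_singleton] at hT
    rcases hT with rfl | rfl
    · exact h1
    · exact h2
  · simp
  · intro T hT U hU hTU
    simp only [Finset.coe_insert, Finset.coe_singleton, Set.mem_insert_iff,
      Set.mem_singleton_iff] at hT hU
    rcases hT with rfl | rfl <;> rcases hU with rfl | rfl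
    · exact absurd rfl hTU
    · exact disjoint_compl_right
    · exact disjoint_compl_left
    · exact absurd rfl hTU

/-- Three or more parts: every part contains a neighbour of every vertex. -/
theorem nbr_in_part {V : Type*} [Finite V] (G : SimpleGraph V) (P : Finset (Set V))
    (hP : IsGDAPartition G P) (hc : 3 ≤ P.card) (b : V) (S : Set V) (hS : S ∈ P) :
    ∃ v ∈ S, G.Adj b v := by
  by_cases hb : b ∈ S
  · have hcard : 1 < (P.erase S).card := by rw [Finset.card_erase_of_mem hS]; omega
    obtain ⟨T, hT, U, hU, hTU⟩ := Finset.one_lt_card.1 hcard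
    rw [Finset.mem_erase] at hT hU
    have dT := hP.2.2 hS hT.2 hT.1.symm
    have dU := hP.2.2 hS hU.2 hU.1.symm
    have dTU := hP.2.2 hT.2 hU.2 hTU
    obtain ⟨t, ht, hbt⟩ := (hP.1 T hT.2).2 b (Set.disjoint_left.1 dT hb)
    obtain ⟨u, hu, hbu⟩ := (hP.1 U hU.2).2 b (Set.disjoint_left.1 dU hb)
    have htu : t ≠ u := fun h => Set.disjoint_left.1 dTU ht (h ▸ hu)
    have hd := (hP.1 S hS).1.2 b hb
    have h2 : 2 ≤ degIn G Sᶜ b := by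
      rw [← Set.ncard_pair htu]
      apply Set.ncard_le_ncard _ (Set.toFinite _)
      rintro x (rfl | rfl)
      · exact ⟨Set.disjoint_right.1 dT ht, hbt⟩
      · exact ⟨Set.disjoint_right.1 dU hu, hbu⟩
    have h3 : 0 < degIn G S b := by omega
    obtain ⟨v, hv⟩ := (Set.ncard_pos (Set.toFinite _)).1 h3
    exact ⟨v, hv⟩
  · exact (hP.1 S hS).2 b hb

theorem card_le_two {V : Type*} [Finite V] (G : SimpleGraph V) (P : Finset (Set V))
    (hP : IsGDAPartition G P) (b : V) (Y : Set V) (hY : 4 ≤ Y.ncard)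
    (hb : ∀ v, G.Adj b v → ∀ u, G.Adj v u ↔ u ∈ Y) : P.card ≤ 2 := by
  by_contra hc
  have key : ∀ S ∈ P, Y.ncard ≤ 2 * (Y ∩ S).ncard + 1 := by
    intro S hS
    obtain ⟨v, hv, hbv⟩ := nbr_in_part G P hP (by omega) b S hS
    have hd := (hP.1 S hS).1.2 v hv
    have e1 : degIn G S v = (Y ∩ S).ncard := by
      unfold degIn
      congr 1
      ext u
      simp only [Set.mem_setOf_eq, hb v hbv, Set.mem_inter_iff]
      tauto
    have e2 : degIn G Sᶜ v = (Y \ S).ncard := by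
      unfold degIn
      congr 1
      ext u
      simp only [Set.mem_setOf_eq, hb v hbv, Set.mem_diff, Set.mem_compl_iff]
      tauto
    have := Set.ncard_inter_add_ncard_diff_eq_ncard Y S (Set.toFinite _)
    omega
  obtain ⟨S, T, U, hS, hT, hU, h1, h2, h3⟩ := Finset.two_lt_card_iff.1 (by omega : 2 < P.card)
  have d1 := hP.2.2 hS hT h1
  have d2 := hP.2.2 hS hU h2
  have d3 := hP.2.2 hT hU h3
  have k1 := key S hS
  have k2 := key T hT
  have k3 := key U hU
  have i1 : Disjoint (Y ∩ S) (Y ∩ T) := d1.mono Set.inter_subset_right Set.inter_subset_right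
  have i2 : Disjoint ((Y ∩ S) ∪ (Y ∩ T)) (Y ∩ U) :=
    Set.disjoint_union_left.2 ⟨d2.mono Set.inter_subset_right Set.inter_subset_right,
      d3.mono Set.inter_subset_right Set.inter_subset_right⟩
  have u1 := Set.ncard_union_eq i1 (Set.toFinite _) (Set.toFinite _)
  have u2 := Set.ncard_union_eq i2 (Set.toFinite _) (Set.toFinite _)
  have u3 : (((Y ∩ S) ∪ (Y ∩ T)) ∪ (Y ∩ U)).ncard ≤ Y.ncard := by
    apply Set.ncard_le_ncard _ (Set.toFinite _)
    intro x hx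
    simp only [Set.mem_union, Set.mem_inter_iff] at hx
    tauto
  omega

theorem case_odd (p q : ℕ) (hp : p.Prime) (hq : q.Prime) (hp2 : p ≠ 2) (hq2 : q ≠ 2) :
    psiG (zdGraph (ZMod p × ZMod (q ^ 2))) = 2 := by
  have : Fact p.Prime := ⟨hp⟩
  have : NeZero q := ⟨hq.ne_zero⟩
  have hq3 : 3 ≤ q := by have := hq.two_le; omega
  have hqq : 9 ≤ q ^ 2 := by nlinarith
  have : Fact (1 < q ^ 2) := ⟨by omega⟩
  let b : ZDV (ZMod p × ZMod (q ^ 2)) := ⟨(0, 1), by simp, (1, 0), by simp, by simp⟩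
  have : Nonempty (ZDV (ZMod p × ZMod (q ^ 2))) := ⟨b⟩
  apply psiG_eq_of
  · apply exists_two
    rintro ⟨x, y⟩ h
    have hx : -x = x := congrArg Prod.fst h
    have hy : -y = y := congrArg Prod.snd h
    have ho : Odd p := hp.odd_of_ne_two hp2
    have ho' : Odd (q ^ 2) := (hq.odd_of_ne_two hq2).pow
    have hx0 : x = 0 := (ZMod.neg_eq_self_iff x).1 hx |>.resolve_right (by
      intro h; rcases ho with ⟨k, hk⟩; omega)
    have hy0 : y = 0 := (ZMod.neg_eq_self_iff y).1 hy |>.resolve_right (by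
      intro h; rcases ho' with ⟨k, hk⟩; omega)
    rw [hx0, hy0]; rfl
  · intro P hP
    let Y : Set (ZDV (ZMod p × ZMod (q ^ 2))) := {u | u.1.1 = 0}
    let f : {y : ZMod (q ^ 2) // y ≠ 0} → ZDV (ZMod p × ZMod (q ^ 2)) := fun y =>
      ⟨(0, y.1), by simp [y.2], (1, 0), by simp, by simp⟩
    have hf : Function.Injective f := by
      intro x y h
      exact Subtype.ext (congrArg (fun z => z.1.2) h)
    have hY : 4 ≤ Y.ncard := by
      have h1 : (Set.range f).ncard ≤ Y.ncard := by
        apply Set.ncard_le_ncard _ (Set.toFinite _)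
        rintro _ ⟨y, rfl⟩
        rfl
      have h2 : (Set.range f).ncard = q ^ 2 - 1 := by
        rw [← Set.image_univ, Set.ncard_image_of_injective _ hf, Set.ncard_univ,
          Nat.card_eq_fintype_card, Fintype.card_subtype_compl, ZMod.card]
        simp
      omega
    refine card_le_two _ P hP b Y hY ?_
    rintro ⟨⟨x, y⟩, hv⟩ ⟨h1, h2⟩ ⟨⟨z, w⟩, hu⟩
    have hy : y = 0 := by simpa [b] using h2
    subst hy
    have hx : x ≠ 0 := by
      rintro rfl
      exact hv.1 rfl
    constructor
    · rintro ⟨-, h⟩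
      have : x * z = 0 := congrArg Prod.fst h
      exact (mul_eq_zero.1 this).resolve_left hx
    · intro h
      have hz : z = 0 := h
      subst hz
      refine ⟨?_, ?_⟩
      · intro h
        exact hx (congrArg (fun t => t.1.1) h)
      · simp

theorem case_two (p : ℕ) (hp : p.Prime) (hp2 : p ≠ 2) :
    psiG (zdGraph (ZMod p × ZMod (2 ^ 2))) = 1 := by
  have : Fact p.Prime := ⟨hp⟩
  have t0 : (2 : ZMod (2 ^ 2)) ≠ 0 := by decide
  have t2 : (2 : ZMod (2 ^ 2)) * 2 = 0 := by decide
  have t3 : ∀ y : ZMod (2 ^ 2), 2 * y = 0 → y = 0 ∨ y = 2 := by decide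
  have t1 : (1 : ZMod (2 ^ 2)) ≠ 0 := by decide
  let b : ZDV (ZMod p × ZMod (2 ^ 2)) := ⟨(0, 1), by simp [t1], (1, 0), by simp, by simp⟩
  let c : ZDV (ZMod p × ZMod (2 ^ 2)) := ⟨(0, 2), by simp [t0], (1, 0), by simp, by simp⟩
  let fA : {a : ZMod p // a ≠ 0} → ZDV (ZMod p × ZMod (2 ^ 2)) := fun a =>
    ⟨(a.1, 0), by simp [a.2], (0, 1), by simp [t1], by simp⟩
  let fD : {a : ZMod p // a ≠ 0} → ZDV (ZMod p × ZMod (2 ^ 2)) := fun a =>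
    ⟨(a.1, 2), by simp [a.2], (0, 2), by simp [t0], by simp [t2]⟩
  have hA : Function.Injective fA := fun x y h =>
    Subtype.ext (congrArg (fun z => z.1.1) h)
  have hD : Function.Injective fD := fun x y h =>
    Subtype.ext (congrArg (fun z => z.1.1) h)
  have : Nonempty (ZDV (ZMod p × ZMod (2 ^ 2))) := ⟨b⟩
  have nD : ∀ a v, (zdGraph (ZMod p × ZMod (2 ^ 2))).Adj (fD a) v → v = c := by
    rintro ⟨a, ha⟩ ⟨⟨x, y⟩, hv⟩ ⟨-, h⟩
    have h1 : a * x = 0 := congrArg Prod.fst h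
    have h2 : 2 * y = 0 := congrArg Prod.snd h
    have hx : x = 0 := (mul_eq_zero.1 h1).resolve_left ha
    subst hx
    rcases t3 y h2 with rfl | rfl
    · exact absurd rfl hv.1
    · rfl
  have nB : ∀ v, (zdGraph (ZMod p × ZMod (2 ^ 2))).Adj b v → ∃ a, v = fA a := by
    rintro ⟨⟨x, y⟩, hv⟩ ⟨-, h⟩
    have hy : y = 0 := by simpa [b] using h
    subst hy
    exact ⟨⟨x, fun h => hv.1 (by rw [h]; rfl)⟩, rfl⟩
  have bA : ∀ a, (zdGraph (ZMod p × ZMod (2 ^ 2))).Adj b (fA a) := by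
    intro a
    refine ⟨fun h => a.2 (congrArg (fun z => z.1.1) h).symm, ?_⟩
    simp [b, fA]
  have cA : ∀ a, (zdGraph (ZMod p × ZMod (2 ^ 2))).Adj c (fA a) := by
    intro a
    refine ⟨fun h => a.2 (congrArg (fun z => z.1.1) h).symm, ?_⟩
    simp [c, fA]
  have cD : ∀ a, (zdGraph (ZMod p × ZMod (2 ^ 2))).Adj c (fD a) := by
    intro a
    refine ⟨fun h => a.2 (congrArg (fun z => z.1.1) h).symm, ?_⟩
    simp [c, fD, t2]
  have nC : ∀ v, (zdGraph (ZMod p × ZMod (2 ^ 2))).Adj c v →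
      (∃ a, v = fA a) ∨ ∃ a, v = fD a := by
    rintro ⟨⟨x, y⟩, hv⟩ ⟨hne, h⟩
    have h2 : 2 * y = 0 := congrArg Prod.snd h
    rcases t3 y h2 with rfl | rfl
    · exact Or.inl ⟨⟨x, fun h => hv.1 (by rw [h]; rfl)⟩, rfl⟩
    · refine Or.inr ⟨⟨x, ?_⟩, rfl⟩
      rintro rfl
      exact hne rfl
  apply psiG_eq_of
  · exact ⟨{Set.univ}, univ_partition _, Finset.card_singleton _⟩
  intro P hP
  by_contra hc
  have hcU : c ∈ ⋃₀ (P : Set (Set (ZDV (ZMod p × ZMod (2 ^ 2))))) := by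
    rw [hP.2.1]; trivial
  obtain ⟨S, hS, hcS⟩ := hcU
  obtain ⟨T, hT, hTS⟩ := Finset.exists_mem_ne (by omega : 1 < P.card) S
  have dis := hP.2.2 hS hT hTS.symm
  have hcT : c ∉ T := Set.disjoint_left.1 dis hcS
  have DT : ∀ a, fD a ∈ T := by
    intro a
    by_contra h
    obtain ⟨u, hu, hau⟩ := (hP.1 T hT).2 _ h
    exact hcT (nD a u hau ▸ hu)
  have DS : ∀ a, fD a ∉ S := fun a => Set.disjoint_right.1 dis (DT a)
  have AS : ∀ a, fA a ∈ S := by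
    intro a₀
    by_contra h
    have hd := (hP.1 S hS).1.2 c hcS
    have hnot : fA a₀ ∉ Set.range fD := by
      rintro ⟨a, ha⟩
      exact t0 (congrArg (fun z => z.1.2) ha)
    have l1 : (insert (fA a₀) (Set.range fD)).ncard ≤
        degIn (zdGraph (ZMod p × ZMod (2 ^ 2))) Sᶜ c := by
      apply Set.ncard_le_ncard _ (Set.toFinite _)
      rintro x (rfl | ⟨a, rfl⟩)
      · exact ⟨h, cA a₀⟩
      · exact ⟨DS a, cD a⟩
    have l2 : degIn (zdGraph (ZMod p × ZMod (2 ^ 2))) S c ≤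
        (Set.range fA \ {fA a₀}).ncard := by
      apply Set.ncard_le_ncard _ (Set.toFinite _)
      rintro x ⟨hx, hcx⟩
      rcases nC x hcx with ⟨a, rfl⟩ | ⟨a, rfl⟩
      · refine ⟨⟨a, rfl⟩, ?_⟩
        intro h'
        rw [Set.mem_singleton_iff] at h'
        exact h (h' ▸ hx)
      · exact absurd hx (DS a)
    rw [Set.ncard_insert_of_notMem hnot (Set.toFinite _)] at l1
    have l3 := Set.ncard_diff_singleton_add_one (Set.mem_range_self (f := fA) a₀) (Set.toFinite _)
    have e1 : (Set.range fA).ncard = (Set.range fD).ncard := by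
      rw [← Set.image_univ, ← Set.image_univ, Set.ncard_image_of_injective _ hA,
        Set.ncard_image_of_injective _ hD]
    omega
  have AT : ∀ a, fA a ∉ T := fun a => Set.disjoint_left.1 dis (AS a)
  have hbT : b ∈ T := by
    by_contra h
    obtain ⟨u, hu, hbu⟩ := (hP.1 T hT).2 _ h
    obtain ⟨a, rfl⟩ := nB u hbu
    exact AT a hu
  have hd := (hP.1 T hT).1.2 b hbT
  have z : degIn (zdGraph (ZMod p × ZMod (2 ^ 2))) T b = 0 := by
    unfold degIn
    rw [Set.ncard_eq_zero (Set.toFinite _)]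
    ext u
    simp only [Set.mem_setOf_eq, Set.mem_empty_iff_false, iff_false]
    rintro ⟨hu, hbu⟩
    obtain ⟨a, rfl⟩ := nB u hbu
    exact AT a hu
  have hne : fA ⟨1, one_ne_zero⟩ ≠ fA ⟨-1, neg_ne_zero.2 one_ne_zero⟩ := by
    intro h
    have h1 : (1 : ZMod p) = -1 := congrArg (fun z => z.1.1) h
    have : Fact (2 < p) := ⟨by have := hp.two_le; omega⟩
    exact ZMod.neg_one_ne_one h1.symm
  have w : 2 ≤ degIn (zdGraph (ZMod p × ZMod (2 ^ 2))) Tᶜ b := by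
    refine (Set.ncard_pair hne).ge.trans ?_
    apply Set.ncard_le_ncard _ (Set.toFinite _)
    rintro x (rfl | rfl)
    · exact ⟨AT _, bA _⟩
    · exact ⟨AT _, bA _⟩
  omega

/-- For primes `p, q` with `p ≠ 2`: `Γ(ℤ_p × ℤ_{q²})` is partitionable into
global defensive alliances iff `q ≠ 2`; namely `ψ_g = 2` if `q ≠ 2` and `ψ_g = 1` if
`q = 2`. -/
theorem stmt11 (p q : ℕ) (hp : p.Prime) (hq : q.Prime) (hp2 : p ≠ 2) :
    (PartitionableGDA (zdGraph (ZMod p × ZMod (q ^ 2))) ↔ q ≠ 2) ∧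
    (q ≠ 2 → psiG (zdGraph (ZMod p × ZMod (q ^ 2))) = 2) ∧
    (q = 2 → psiG (zdGraph (ZMod p × ZMod (q ^ 2))) = 1) := by
  have h1 : q ≠ 2 → psiG (zdGraph (ZMod p × ZMod (q ^ 2))) = 2 := case_odd p q hp hq hp2
  have h2 : q = 2 → psiG (zdGraph (ZMod p × ZMod (q ^ 2))) = 1 := by
    rintro rfl
    exact case_two p hp hp2
  refine ⟨⟨fun h hq2 => ?_, fun h => ?_⟩, h1, h2⟩
  · have := h2 hq2
    unfold PartitionableGDA at h
    omega
  · exact (h1 h).ge
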